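/- arXiv:2503.00181 — 2 statements merged into one kernel-verified Lean document; each statement's English description precedes it below -/
import Mathlib

section
/- Let Δ be an (m,n)-invariant set, bounded and co-bounded, with n-generators a_0 < a_1 < ... < a_{n-1}. Then for each i, the element a_i is an m-generator of the set Δ^{(i)} = Δ \ {a_0, ..., a_{i-1}}, i.e., a_i − m ∉ Δ^{(i)}. -/
/-- The shift of a set of integers: `Δ + k`. -/
def shiftSet (Δ : Set ℤ) (k : ℤ) : Set ℤ := (· + k) '' Δ

/-- `Δ` is `k`-invariant if `Δ + k ⊆ Δ`. -/
def Invariant (k : ℤ) (Δ : Set ℤ) : Prop := shiftSet Δ k ⊆ Δ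

/-- `Δ` is bounded (has a minimum element). -/
def HasMin (Δ : Set ℤ) : Prop := ∃ a ∈ Δ, ∀ x ∈ Δ, a ≤ x

/-- `Δ` is co-bounded: contains all sufficiently large integers. -/
def CoBounded (Δ : Set ℤ) : Prop := ∃ N : ℤ, ∀ x : ℤ, N ≤ x → x ∈ Δ

/-- The `k`-generators of `Δ`: elements `a ∈ Δ` with `a - k ∉ Δ`, i.e. `Δ \ (Δ + k)`. -/
def gens (k : ℤ) (Δ : Set ℤ) : Set ℤ := Δ \ shiftSet Δ k

/-- The `(j+1)`-st smallest element of a set of integers. -/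
noncomputable def nthSmallest : ℕ → Set ℤ → ℤ
  | 0, S => sInf S
  | j+1, S => nthSmallest j (S \ {sInf S})

/-- The letter `j ∈ [m]` acts on an `m`-invariant set by removing its `(j+1)`-st
smallest `m`-generator. -/
noncomputable def letterAct (m : ℤ) (j : ℕ) (Δ : Set ℤ) : Set ℤ :=
  Δ \ {nthSmallest j (gens m Δ)}

/-- `steps m p Δ i = p_{i-1} ⋯ p_1 p_0 ⋅ Δ`: the word acts one letter at a
time, the letter `p 0` (rightmost) acting first. -/
noncomputable def steps (m : ℤ) (p : ℕ → ℕ) (Δ : Set ℤ) : ℕ → Set ℤ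
  | 0 => Δ
  | i+1 => letterAct m (p i) (steps m p Δ i)

/-!
Subtracting `m` from an `n`-generator `g` of an `m`-invariant set `Δ` either leaves `Δ` or gives
another `n`-generator: if `g - m - n` were in `Δ`, so would be `g - n`. For `m > 0` this other
generator is smaller than `g`, so `g` becomes an `m`-generator once all `n`-generators below it
have been removed.
-/

section

variable {m n k x g : ℤ} {Δ : Set ℤ}

theorem mem_shiftSet_iff : x ∈ shiftSet Δ k ↔ x - k ∈ Δ := by
  simp [shiftSet, sub_eq_add_neg]

theorem mem_gens_iff : x ∈ gens k Δ ↔ x ∈ Δ ∧ x - k ∉ Δ := by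
  rw [gens, Set.mem_sdiff, mem_shiftSet_iff]

theorem Invariant.add_mem (hΔ : Invariant k Δ) (hx : x ∈ Δ) : x + k ∈ Δ :=
  hΔ (Set.mem_image_of_mem _ hx)

theorem Invariant.sub_mem_gens (hΔ : Invariant m Δ) (hg : g ∈ gens n Δ) (hgm : g - m ∈ Δ) :
    g - m ∈ gens n Δ := by
  refine mem_gens_iff.mpr ⟨hgm, fun hgmn : g - m - n ∈ Δ ↦ (mem_gens_iff.mp hg).2 ?_⟩
  have hgn : g - m - n + m ∈ Δ := hΔ.add_mem hgmn
  rwa [sub_right_comm, sub_add_cancel] at hgn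

theorem Invariant.mem_gens_sdiff_gens_inter_Iio (hΔ : Invariant m Δ) (hm : 0 < m)
    (hg : g ∈ gens n Δ) : g ∈ gens m (Δ \ (gens n Δ ∩ Set.Iio g)) := by
  refine mem_gens_iff.mpr ⟨⟨hg.1, fun hlt ↦ lt_irrefl g hlt.2⟩, ?_⟩
  rintro ⟨hgm, hnot⟩
  exact hnot ⟨hΔ.sub_mem_gens hg hgm, sub_lt_self g hm⟩

theorem image_Iio_eq_range_inter_Iio {ι α : Type*} [LinearOrder ι] [Preorder α] {a : ι → α}
    (ha : StrictMono a) (i : ι) : a '' Set.Iio i = Set.range a ∩ Set.Iio (a i) := by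
  have hpre : a ⁻¹' Set.Iio (a i) = Set.Iio i := Set.ext fun _ ↦ ha.lt_iff_lt
  rw [← hpre, Set.image_preimage_eq_range_inter]

theorem n_generator_is_m_generator_general {ι : Type*} [LinearOrder ι] (hm : 0 < m)
    (hΔ : Invariant m Δ) {a : ι → ℤ} (ha : StrictMono a) (hrange : Set.range a = gens n Δ)
    (i : ι) : a i ∈ gens m (Δ \ (a '' Set.Iio i)) := by
  have hi : a i ∈ gens n Δ := hrange ▸ Set.mem_range_self i
  rw [image_Iio_eq_range_inter_Iio ha, hrange]
  exact hΔ.mem_gens_sdiff_gens_inter_Iio hm hi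

end

/-- If `a_0 < a_1 < … < a_{n-1}` are the `n`-generators of a bounded, co-bounded
`(m,n)`-invariant set `Δ`, then `a_i` is an `m`-generator of
`Δ^{(i)} = Δ \ {a_0, …, a_{i-1}}`. -/
theorem n_generator_is_m_generator (m n : ℕ) (hm : 0 < m) (hn : 0 < n) (Δ : Set ℤ)
    (hIm : Invariant m Δ) (hIn : Invariant n Δ) (hb : HasMin Δ) (hc : CoBounded Δ)
    (a : Fin n → ℤ) (ha : StrictMono a) (hrange : Set.range a = gens n Δ) :
    ∀ i : Fin n,
      a i ∈ Δ \ (a '' {k : Fin n | k < i}) ∧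
      a i - m ∉ Δ \ (a '' {k : Fin n | k < i}) :=
  fun i ↦ mem_gens_iff.mp <|
    n_generator_is_m_generator_general (Nat.cast_pos.mpr hm) hIm ha hrange i
end

section
/- Let gcd(m,n) = 1, p ∈ [m]^n an (m,n)-parking function with unique fixed point x_p ∈ V^m, and A_p the alcove containing x_p. Then for every x ∈ V^m the orbit {p^k · x} is eventually periodic with period dividing m: there exists k ≥ 0 with p^{k+m} · x = p^k · x. -/
/-- The shift during the action of letter `i` on `ℝ^m`: add `m` to coordinate `i`
and subtract `1` from every coordinate. -/
def shiftVec (m : ℕ) (i : Fin m) (x : Fin m → ℝ) : Fin m → ℝ :=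
  fun j => x j - 1 + if j = i then (m : ℝ) else 0

/-- Sort the coordinates of a vector into weakly increasing order. -/
noncomputable def sortVec {m : ℕ} (x : Fin m → ℝ) : Fin m → ℝ := x ∘ Tuple.sort x

/-- The action of the letter `i ∈ [m]` on `V^m`: shift, then re-sort. -/
noncomputable def letterV (m : ℕ) (i : Fin m) (x : Fin m → ℝ) : Fin m → ℝ :=
  sortVec (shiftVec m i x)

/-- `stepsV m p x i = p_{i-1} ⋯ p_1 p_0 ⋅ x`: the word acts letter by letter, the
letter `p 0` (rightmost) acting first. -/
noncomputable def stepsV (m : ℕ) (p : ℕ → Fin m) (x : Fin m → ℝ) : ℕ → (Fin m → ℝ)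
  | 0 => x
  | k+1 => letterV m (p k) (stepsV m p x k)

/-- Membership in the Weyl chamber `V^m`: coordinates sum to `0` and are weakly
increasing. -/
def InV (m : ℕ) (x : Fin m → ℝ) : Prop := (∑ j, x j) = 0 ∧ Monotone x

/-- The Euclidean norm on `ℝ^m`. -/
noncomputable def eNorm {m : ℕ} (x : Fin m → ℝ) : ℝ := Real.sqrt (∑ j, (x j) ^ 2)

/-- `p` (a word of length `n` in `[m]`, extended arbitrarily) is an
`(m,n)`-parking function: `#{j < n : p_j < i} ≥ i·n/m` for all `1 ≤ i ≤ m`. -/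
def IsParking (m n : ℕ) (p : ℕ → Fin m) : Prop :=
  ∀ i : ℕ, 1 ≤ i → i ≤ m →
    i * n ≤ ((Finset.range n).filter (fun j => (p j : ℕ) < i)).card * m

/-!
Each letter acts on `ℝ^m` without increasing Euclidean distances, by the rearrangement inequality.
Coprimality makes the parking inequalities strict for `0 < i < m`, so on `V^m` one application of
the word `p` pushes far away points towards the origin. Large balls in `V^m` are therefore
invariant, and compactness yields a fixed point `w`.

Modulo `m` a letter permutes the coordinates and subtracts `1` from each, so the residues of the
coordinates of `w` are stable under translation by `n`, which has order `m` in `ℝ / mℤ`. Hence they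
are distinct and `w` lies in the interior of an alcove. Near `w` the word acts by a fixed
permutation of coordinate displacements, and for `p^m` this permutation preserves residues, so it
is trivial: `p^m` is the identity near `w`.

In a strictly convex space, a nonexpansive map that is the identity near `w` fixes every point that
it does not bring closer to `w`. The orbit of `x` under `p^m` is bounded and its coordinates have
residues among those of `x`, so it is finite. Its distance to `w` thus cannot decrease forever.
-/

open Bornology Filter Function Metric Set Topology WithLp

section Nonexpansive

variable {E : Type*} [NormedAddCommGroup E] [NormedSpace ℝ E]

theorem exists_lineMap_eq_self_of_lipschitzOnWith_one {K : Set E} {c : E} {f : E → E}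
    (hK : IsComplete K) (hc : c ∈ K) (hstar : StarConvex ℝ c K) (hf : LipschitzOnWith 1 f K)
    (hmaps : MapsTo f K K) {r : ℝ} (hr : r ∈ Ioo (0 : ℝ) 1) :
    ∃ x ∈ K, AffineMap.lineMap c (f x) r = x := by
  lift r to NNReal using hr.1.le
  have hmaps' : MapsTo (fun x ↦ AffineMap.lineMap c (f x) (r : ℝ)) K K := fun x hx ↦ by
    simpa only [AffineMap.lineMap_apply_module] using
      hstar (hmaps hx) (sub_nonneg.2 hr.2.le) hr.1.le (sub_add_cancel 1 (r : ℝ))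
  have hcontr : ContractingWith r (hmaps'.restrict _ K K) := by
    refine ⟨mod_cast hr.2, LipschitzWith.of_dist_le_mul fun x y ↦ ?_⟩
    have hxy : dist (f x) (f y) ≤ dist (x : E) y := by
      simpa using hf.dist_le_mul x x.2 y y.2
    calc dist (AffineMap.lineMap c (f x) (r : ℝ)) (AffineMap.lineMap c (f y) (r : ℝ))
        = r * dist (f x) (f y) := by
          simp [AffineMap.lineMap_apply, dist_smul₀]
      _ ≤ r * dist x y := by gcongr; exact hxy
  obtain ⟨x, hx, hfix, -⟩ := hcontr.exists_fixedPoint' hK hmaps' hc (edist_ne_top _ _)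
  exact ⟨x, hx, hfix⟩

theorem exists_isFixedPt_of_lipschitzOnWith_one {K : Set E} {c : E} {f : E → E}
    (hK : IsCompact K) (hc : c ∈ K) (hstar : StarConvex ℝ c K) (hf : LipschitzOnWith 1 f K)
    (hmaps : MapsTo f K K) : ∃ x ∈ K, IsFixedPt f x := by
  obtain ⟨x, hx, hmin⟩ :=
    hK.exists_isMinOn ⟨c, hc⟩ (f := fun x ↦ dist (f x) x)
      (continuous_dist.comp_continuousOn (hf.continuousOn.prodMk continuousOn_id))
  have hbound : ∀ r ∈ Ioo (0 : ℝ) 1, dist (f x) x ≤ (1 - r) * diam K := by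
    intro r hr
    obtain ⟨y, hy, hyr⟩ :=
      exists_lineMap_eq_self_of_lipschitzOnWith_one hK.isComplete hc hstar hf hmaps hr
    calc dist (f x) x ≤ dist (f y) y := hmin hy
      _ = dist (f y) (AffineMap.lineMap c (f y) r) := by rw [hyr]
      _ = (1 - r) * dist c (f y) := by
        rw [dist_right_lineMap, Real.norm_of_nonneg (sub_nonneg.2 hr.2.le)]
      _ ≤ (1 - r) * diam K :=
        mul_le_mul_of_nonneg_left (dist_le_diam_of_mem hK.isBounded hc (hmaps hy))
          (sub_nonneg.2 hr.2.le)
  have hlim : Tendsto (fun r : ℝ ↦ (1 - r) * diam K) (𝓝[<] 1) (𝓝 0) :=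
    tendsto_nhdsWithin_of_tendsto_nhds <| by
      have : Continuous fun r : ℝ ↦ (1 - r) * diam K := by fun_prop
      simpa using this.tendsto 1
  exact ⟨x, hx, dist_le_zero.1 <| ge_of_tendsto hlim <|
    eventually_of_mem (Ioo_mem_nhdsLT one_pos) hbound⟩

theorem isFixedPt_of_dist_le_of_eventuallyEq_id [StrictConvexSpace ℝ E] {f : E → E} {w z : E}
    (hf : LipschitzWith 1 f) (hid : f =ᶠ[𝓝 w] id) (hz : dist w z ≤ dist w (f z)) :
    IsFixedPt f z := by
  have hline : Tendsto (AffineMap.lineMap w z : ℝ → E) (𝓝[>] 0) (𝓝 w) :=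
    tendsto_nhdsWithin_of_tendsto_nhds <| by
      simpa using (AffineMap.lineMap_continuous (p := w) (q := z)).tendsto (0 : ℝ)
  obtain ⟨r, hfix, hr0, hr1⟩ :=
    ((hline.eventually hid).and (Ioo_mem_nhdsGT one_pos)).exists
  set y := AffineMap.lineMap w z r
  have hwy : dist w y = r * dist w z := by
    rw [dist_left_lineMap, Real.norm_of_nonneg hr0.le]
  have hyz : dist y z = (1 - r) * dist w z := by
    rw [dist_comm, dist_right_lineMap, Real.norm_of_nonneg (sub_nonneg.2 hr1.le)]
  have hyfz : dist y (f z) ≤ dist y z := by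
    simpa [show f y = y from hfix] using hf.dist_le_mul y z
  have htri := dist_triangle w y (f z)
  have hwz : dist w (f z) = dist w z := by linarith
  -- By strict convexity the distances from `w` and from `f z` determine a point between them.
  have hy : y = AffineMap.lineMap w (f z) r :=
    eq_lineMap_of_dist_eq_mul_of_dist_eq_mul (hwz ▸ hwy) (by rw [hwz]; linarith)
  simpa [y, AffineMap.lineMap_apply, hr0.ne', eq_comm, IsFixedPt] using hy

theorem exists_isFixedPt_iterate_of_eventuallyEq_id [StrictConvexSpace ℝ E] {f : E → E} {w x : E}
    (hf : LipschitzWith 1 f) (hid : f =ᶠ[𝓝 w] id) (hfin : (range fun k ↦ f^[k] x).Finite) :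
    ∃ k, IsFixedPt f (f^[k] x) := by
  have hanti : Antitone fun k ↦ dist w (f^[k] x) := antitone_nat_of_succ_le fun k ↦ by
    simpa [iterate_succ_apply', show f w = w from hid.eq_of_nhds] using
      hf.dist_le_mul w (f^[k] x)
  obtain ⟨a, b, hab, heq⟩ :=
    Set.Finite.exists_lt_map_eq_of_forall_mem (fun k ↦ mem_range_self k) hfin
  refine ⟨a, isFixedPt_of_dist_le_of_eventuallyEq_id hf hid ?_⟩
  rw [← iterate_succ_apply' f a x]
  calc _ = dist w (f^[b] x) := by rw [heq]
    _ ≤ _ := hanti hab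

end Nonexpansive

theorem eventually_sort_eq {α : Type*} [LinearOrder α] [TopologicalSpace α] [OrderClosedTopology α]
    {k : ℕ} {a : Fin k → α} (ha : Injective a) : ∀ᶠ b in 𝓝 a, Tuple.sort b = Tuple.sort a := by
  have hsort : StrictMono (a ∘ Tuple.sort a) :=
    (Tuple.monotone_sort a).strictMono_of_injective (ha.comp (Tuple.sort a).injective)
  have hlt : ∀ i j, i < j → ∀ᶠ b : Fin k → α in 𝓝 a, b (Tuple.sort a i) < b (Tuple.sort a j) :=
    fun i j hij ↦ (continuous_apply _).continuousAt.eventually_lt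
      (continuous_apply _).continuousAt (hsort hij)
  filter_upwards [eventually_all.2 fun i ↦ eventually_all.2 fun j ↦
    eventually_imp_distrib_left.2 (hlt i j)] with b hb
  have hmono : StrictMono (b ∘ Tuple.sort a) := fun i j hij ↦ hb i j hij
  exact (Tuple.eq_sort_iff.2
    ⟨hmono.monotone, fun i j hij heq ↦ absurd heq (hmono hij).ne⟩).symm

section AddCircle

theorem injective_of_forall_eq_sub_addOrderOf {ι A : Type*} [Fintype ι] [AddGroup A] {φ : ι → A}
    {a : A} (hcard : Fintype.card ι = addOrderOf a) {s : ι → ι} (hs : ∀ j, φ j = φ (s j) - a) :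
    Injective φ := by
  cases isEmpty_or_nonempty ι with
  | inl h => exact injective_of_subsingleton φ
  | inr h =>
    obtain ⟨i⟩ := h
    have hiter : ∀ k : ℕ, φ (s^[k] i) = φ i + k • a := by
      intro k
      induction k with
      | zero => simp
      | succ k ih =>
        rw [iterate_succ_apply', succ_nsmul, ← add_assoc, ← ih, hs (s^[k] i), sub_add_cancel]
    have hinj : Injective fun k : Fin (Fintype.card ι) ↦ φ (s^[k] i) := by
      intro k l hkl
      simp only [hiter, add_right_inj] at hkl
      exact Fin.ext (nsmul_injOn_Iio_addOrderOf (hcard ▸ k.2) (hcard ▸ l.2) hkl)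
    have hsurj : Surjective fun k : Fin (Fintype.card ι) ↦ s^[k] i :=
      ((Fintype.bijective_iff_injective_and_card _).2
        ⟨Injective.of_comp (f := φ) hinj, Fintype.card_fin _⟩).surjective
    exact Injective.of_comp_right hinj hsurj

theorem finite_inter_preimage_coe {p : ℝ} (hp : 0 < p) {K : Set ℝ} (hK : IsBounded K)
    {T : Set (AddCircle p)} (hT : T.Finite) : (K ∩ (↑) ⁻¹' T).Finite := by
  obtain ⟨R, hR⟩ := hK.subset_closedBall 0
  rw [← biUnion_preimage_singleton, inter_iUnion₂]
  refine hT.biUnion fun t _ ↦ ?_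
  obtain ⟨a, rfl⟩ := QuotientAddGroup.mk_surjective t
  refine ((finite_Icc ⌈(-R - a) / p⌉ ⌊(R - a) / p⌋).image fun z : ℤ ↦ a + z * p).subset ?_
  rintro y ⟨hyK, hy : (y : AddCircle p) = a⟩
  obtain ⟨z, hz⟩ := (AddCircle.coe_eq_zero_iff p (x := y - a)).1 <| by
    rw [AddCircle.coe_sub, hy, sub_self]
  rw [zsmul_eq_mul] at hz
  have hyR : |y| ≤ R := by simpa using hR hyK
  rw [abs_le] at hyR
  refine ⟨z, ⟨Int.ceil_le.2 ((div_le_iff₀ hp).2 ?_), Int.le_floor.2 ((le_div_iff₀ hp).2 ?_)⟩, ?_⟩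
  all_goals linarith

theorem finite_of_isBounded_of_forall_coe_mem {ι : Type*} [Finite ι] {p : ℝ} (hp : 0 < p)
    {T : Set (AddCircle p)} (hT : T.Finite) {S : Set (ι → ℝ)} (hS : IsBounded S)
    (hST : ∀ y ∈ S, ∀ j, (y j : AddCircle p) ∈ T) : S.Finite :=
  (Finite.pi' fun j ↦ finite_inter_preimage_coe hp (hS.image_eval j) hT).subset
    fun y hy j ↦ ⟨mem_image_of_mem _ hy, hST y hy j⟩

end AddCircle

section SummationByParts

theorem sum_comp_eq_card_mul_sub {ι R : Type*} [Ring R] (s : Finset ι) {f : ι → ℕ} {M : ℕ}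
    (hf : ∀ j ∈ s, f j ≤ M) (X : ℕ → R) :
    ∑ j ∈ s, X (f j) =
      s.card * X M -
        ∑ k ∈ Finset.range M, ({j ∈ s | f j < k + 1} : Finset ι).card * (X (k + 1) - X k) := by
  have hX : ∀ j ∈ s, X (f j) =
      X M - ∑ k ∈ Finset.range M, if f j < k + 1 then X (k + 1) - X k else 0 := by
    intro j hj
    rw [← Finset.sum_filter]
    have hIco : ({k ∈ Finset.range M | f j < k + 1} : Finset ℕ) = Finset.Ico (f j) M := by
      ext k
      rw [Finset.mem_filter, Finset.mem_range, Finset.mem_Ico]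
      omega
    rw [hIco, Finset.sum_Ico_sub X (hf j hj), sub_sub_cancel]
  rw [Finset.sum_congr rfl hX, Finset.sum_sub_distrib, Finset.sum_comm]
  simp only [← Finset.sum_filter, Finset.sum_const, nsmul_eq_mul]

theorem sum_range_succ_eq_mul_sub {R : Type*} [CommRing R] (X : ℕ → R) (M : ℕ) :
    ∑ k ∈ Finset.range (M + 1), X k =
      (M + 1) * X M - ∑ k ∈ Finset.range M, ((k : R) + 1) * (X (k + 1) - X k) := by
  induction M with
  | zero => simp
  | succ M ih =>
    rw [Finset.sum_range_succ, ih, Finset.sum_range_succ _ M]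
    push_cast
    ring

end SummationByParts

section ParkingFunction

variable {m n : ℕ}

theorem IsParking.congr {p q : ℕ → Fin m} (hp : IsParking m n p) (h : ∀ j < n, p j = q j) :
    IsParking m n q := fun i hi him ↦ by
  have hfilter : (Finset.range n).filter (fun j ↦ (p j : ℕ) < i) =
      (Finset.range n).filter fun j ↦ (q j : ℕ) < i :=
    Finset.filter_congr fun j hj ↦ by rw [h j (Finset.mem_range.1 hj)]
  exact hfilter ▸ hp i hi him

theorem IsParking.mul_lt_card_mul (hcop : Nat.Coprime m n) {q : ℕ → Fin m} (hq : IsParking m n q)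
    {i : ℕ} (hi : 0 < i) (him : i < m) :
    i * n < ((Finset.range n).filter fun j ↦ (q j : ℕ) < i).card * m := by
  refine (hq i hi him.le).lt_of_ne fun heq ↦ ?_
  have hdvd : m ∣ i := hcop.dvd_of_dvd_mul_right ⟨_, heq.trans (mul_comm _ _)⟩
  exact (Nat.le_of_dvd hi hdvd).not_gt him

theorem IsParking.mul_sum_le (hcop : Nat.Coprime m n) {q : ℕ → Fin m} (hq : IsParking m n q)
    {x : Fin m → ℝ} (hx : Monotone x) (i j : Fin m) :
    m * ∑ t ∈ Finset.range n, x (q t) ≤ n * ∑ k, x k - (x i - x j) := by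
  obtain ⟨M, rfl⟩ : ∃ M, m = M + 1 := Nat.exists_eq_succ_of_ne_zero i.pos.ne'
  set X : ℕ → ℝ := fun k ↦ x (Fin.clamp k M)
  have hXx : ∀ k : Fin (M + 1), x k = X k := fun k ↦ congrArg x (Fin.ext (min_eq_left k.is_le).symm)
  have hXmono : Monotone X := fun a b hab ↦ hx (min_le_min_right M hab)
  set N : ℕ → ℕ := fun k ↦ ((Finset.range n).filter fun t ↦ (q t : ℕ) < k + 1).card with hN
  have hletters : ∑ t ∈ Finset.range n, x (q t) =
      n * X M - ∑ k ∈ Finset.range M, N k * (X (k + 1) - X k) := by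
    simpa [hXx, hN] using sum_comp_eq_card_mul_sub (Finset.range n) (f := fun t ↦ q t) (M := M)
      (fun t _ ↦ Fin.is_le _) X
  have hcoords : ∑ k, x k =
      (M + 1) * X M - ∑ k ∈ Finset.range M, ((k : ℝ) + 1) * (X (k + 1) - X k) := by
    rw [← sum_range_succ_eq_mul_sub, ← Fin.sum_univ_eq_sum_range]
    exact Finset.sum_congr rfl fun k _ ↦ hXx k
  have hgap : X M - X 0 ≤
      ∑ k ∈ Finset.range M, ((M + 1) * N k - n * ((k : ℝ) + 1)) * (X (k + 1) - X k) := by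
    rw [← Finset.sum_range_sub X M]
    refine Finset.sum_le_sum fun k hk ↦
      le_mul_of_one_le_left (sub_nonneg.2 (hXmono k.le_succ)) ?_
    have hlt : ((k + 1) * n + 1 : ℝ) ≤ N k * (M + 1) := mod_cast
      hq.mul_lt_card_mul hcop k.succ_pos (Nat.succ_lt_succ (Finset.mem_range.1 hk))
    linarith
  simp only [sub_mul, mul_assoc, Finset.sum_sub_distrib, ← Finset.mul_sum] at hgap
  have hi : x i ≤ X M := hXx i ▸ hXmono i.is_le
  have hj : X 0 ≤ x j := hXx j ▸ hXmono (Nat.zero_le _)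
  rw [hletters, hcoords]
  push_cast
  linarith

end ParkingFunction

section Euclidean

variable {m : ℕ}

theorem norm_toLp_comp_perm {ι : Type*} [Fintype ι] (x : ι → ℝ) (σ : Equiv.Perm ι) :
    ‖toLp 2 (x ∘ σ)‖ = ‖toLp 2 x‖ := by
  simp only [EuclideanSpace.norm_eq, comp_apply]
  rw [Equiv.sum_comp σ fun j ↦ ‖x j‖ ^ 2]

theorem norm_sq_toLp_le_card_mul {ι : Type*} [Fintype ι] {x : ι → ℝ} {a b : ℝ}
    (hsum : ∑ k, x k = 0) (ha : ∀ k, a ≤ x k) (hb : ∀ k, x k ≤ b) :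
    ‖toLp 2 x‖ ^ 2 ≤ Fintype.card ι * (b - a) ^ 2 := by
  rw [EuclideanSpace.real_norm_sq_eq, ← nsmul_eq_mul]
  refine Finset.sum_le_card_nsmul _ _ _ fun k hk ↦ ?_
  obtain ⟨i, -, hi⟩ : ∃ i ∈ Finset.univ, x i ≤ 0 :=
    Finset.exists_le_of_sum_le ⟨k, hk⟩ (by simp [hsum])
  obtain ⟨j, -, hj⟩ : ∃ j ∈ Finset.univ, 0 ≤ x j :=
    Finset.exists_le_of_sum_le ⟨k, hk⟩ (by simp [hsum])
  exact sq_le_sq' (by linarith [ha k, hb j]) (by linarith [hb k, ha i])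

theorem sum_mul_le_sum_sortVec_mul_sortVec (a b : Fin m → ℝ) :
    ∑ j, a j * b j ≤ ∑ j, sortVec a j * sortVec b j := by
  have hmono : Monovary (sortVec a) (sortVec b) :=
    (Tuple.monotone_sort a).monovary (Tuple.monotone_sort b)
  calc ∑ j, a j * b j
      = ∑ j, sortVec a j * sortVec b (((Tuple.sort a).trans (Tuple.sort b).symm) j) := by
        rw [← Equiv.sum_comp (Tuple.sort a) fun j ↦ a j * b j]
        simp [sortVec]
    _ ≤ ∑ j, sortVec a j * sortVec b j := hmono.sum_mul_comp_perm_le_sum_mul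

theorem dist_toLp_sortVec_le (a b : Fin m → ℝ) :
    dist (toLp 2 (sortVec a)) (toLp 2 (sortVec b)) ≤ dist (toLp 2 a) (toLp 2 b) := by
  have hinner := sum_mul_le_sum_sortVec_mul_sortVec a b
  rw [dist_eq_norm, dist_eq_norm, ← sq_le_sq₀ (norm_nonneg _) (norm_nonneg _),
    norm_sub_sq_real, norm_sub_sq_real, sortVec, sortVec, norm_toLp_comp_perm, norm_toLp_comp_perm]
  simp only [EuclideanSpace.inner_toLp_toLp, dotProduct, Pi.star_apply, star_trivial]
  simp only [sortVec, mul_comm] at hinner ⊢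
  linarith

theorem sortVec_of_monotone {x : Fin m → ℝ} (hx : Monotone x) : sortVec x = x := by
  rw [sortVec, Tuple.sort_eq_refl_iff_monotone.2 hx]
  rfl

theorem norm_sq_toLp_shiftVec (i : Fin m) (x : Fin m → ℝ) :
    ‖toLp 2 (shiftVec m i x)‖ ^ 2 =
      ‖toLp 2 x‖ ^ 2 - 2 * ∑ j, x j + 2 * m * x i + (m ^ 2 - m) := by
  have hsq : ∀ j, shiftVec m i x j ^ 2 =
      x j ^ 2 - 2 * x j + 1 + if j = i then 2 * m * (x j - 1) + (m : ℝ) ^ 2 else 0 := by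
    intro j
    unfold shiftVec
    split_ifs <;> ring
  simp only [EuclideanSpace.real_norm_sq_eq, hsq, Finset.sum_add_distrib, Finset.sum_sub_distrib,
    ← Finset.mul_sum, Finset.sum_ite_eq', Finset.mem_univ, if_true, Finset.sum_const,
    Finset.card_univ, Fintype.card_fin, nsmul_eq_mul]
  ring

end Euclidean

section WordAction

variable {m n : ℕ}

/-- The action of the word `q_{t-1} ⋯ q_0` as a self-map of Euclidean space, so that `dist` is the
Euclidean distance (and not the sup distance of `Fin m → ℝ`). -/
noncomputable def wordMap (q : ℕ → Fin m) (t : ℕ) (y : EuclideanSpace ℝ (Fin m)) :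
    EuclideanSpace ℝ (Fin m) :=
  toLp 2 (stepsV m q y t)

theorem dist_toLp_letterV_le (i : Fin m) (x y : Fin m → ℝ) :
    dist (toLp 2 (letterV m i x)) (toLp 2 (letterV m i y)) ≤ dist (toLp 2 x) (toLp 2 y) := by
  refine (dist_toLp_sortVec_le _ _).trans_eq ?_
  simp [EuclideanSpace.dist_eq, shiftVec]

theorem lipschitzWith_wordMap (q : ℕ → Fin m) (t : ℕ) : LipschitzWith 1 (wordMap q t) := by
  refine LipschitzWith.mk_one fun x y ↦ ?_
  induction t with
  | zero => exact le_rfl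
  | succ t ih => exact (dist_toLp_letterV_le _ _ _).trans ih

theorem continuous_stepsV (q : ℕ → Fin m) (t : ℕ) : Continuous fun x ↦ stepsV m q x t :=
  (PiLp.continuous_ofLp 2 _).comp <|
    (lipschitzWith_wordMap q t).continuous.comp (PiLp.continuous_toLp 2 _)

theorem stepsV_add (q : ℕ → Fin m) (x : Fin m → ℝ) (s t : ℕ) :
    stepsV m q x (s + t) = stepsV m (fun i ↦ q (s + i)) (stepsV m q x s) t := by
  induction t with
  | zero => rfl
  | succ t ih => rw [← add_assoc, stepsV, ih, stepsV]

theorem iterate_wordMap {q : ℕ → Fin m} (hq : Periodic q n) (k : ℕ) :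
    (wordMap q n)^[k] = wordMap q (n * k) := by
  induction k with
  | zero => rfl
  | succ k ih =>
    have hshift : (fun i ↦ q (n * k + i)) = q := funext fun i ↦ by
      rw [add_comm, mul_comm, ← smul_eq_mul]; exact hq.nsmul k i
    ext y j
    rw [iterate_succ_apply', ih, wordMap, wordMap, wordMap, mul_add_one, stepsV_add, hshift]

theorem monotone_stepsV {x : Fin m → ℝ} (hx : Monotone x) (q : ℕ → Fin m) (t : ℕ) :
    Monotone (stepsV m q x t) := by
  cases t with
  | zero => exact hx
  | succ t => exact Tuple.monotone_sort _

theorem inV_letterV {x : Fin m → ℝ} (hx : InV m x) (i : Fin m) : InV m (letterV m i x) := by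
  refine ⟨?_, Tuple.monotone_sort _⟩
  calc ∑ j, letterV m i x j = ∑ j, shiftVec m i x j := Equiv.sum_comp _ _
    _ = 0 := by simp [shiftVec, Finset.sum_add_distrib, Finset.sum_sub_distrib, hx.1]

theorem inV_stepsV {x : Fin m → ℝ} (hx : InV m x) (q : ℕ → Fin m) (t : ℕ) :
    InV m (stepsV m q x t) := by
  induction t with
  | zero => exact hx
  | succ t ih => exact inV_letterV ih (q t)

end WordAction

section Drift

variable {m n : ℕ}

theorem dist_toLp_letterV_self_le (i : Fin m) {x : Fin m → ℝ} (hx : Monotone x) :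
    dist (toLp 2 (letterV m i x)) (toLp 2 x) ≤ m := by
  have hshift : toLp 2 (shiftVec m i x) - toLp 2 x = toLp 2 (shiftVec m i 0) := by
    ext j
    simp only [shiftVec, PiLp.sub_apply, Pi.zero_apply]
    ring
  calc dist (toLp 2 (letterV m i x)) (toLp 2 x)
      = dist (toLp 2 (sortVec (shiftVec m i x))) (toLp 2 (sortVec x)) := by
        rw [sortVec_of_monotone hx, letterV]
    _ ≤ ‖toLp 2 (shiftVec m i 0)‖ := by
        rw [← hshift, ← dist_eq_norm]
        exact dist_toLp_sortVec_le _ _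
    _ ≤ m := by
        rw [← sq_le_sq₀ (norm_nonneg _) m.cast_nonneg, norm_sq_toLp_shiftVec]
        simp

theorem stepsV_apply_le (q : ℕ → Fin m) {x : Fin m → ℝ} (hx : Monotone x) (t : ℕ) (j : Fin m) :
    stepsV m q x t j ≤ x j + m * t := by
  induction t with
  | zero => simp [stepsV]
  | succ t ih =>
    have hcoord : stepsV m q x (t + 1) j - stepsV m q x t j ≤ m :=
      calc _ ≤ dist (stepsV m q x (t + 1) j) (stepsV m q x t j) := le_abs_self _
        _ ≤ dist (toLp 2 (stepsV m q x (t + 1))) (toLp 2 (stepsV m q x t)) :=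
          PiLp.dist_apply_le (toLp 2 (stepsV m q x (t + 1))) (toLp 2 (stepsV m q x t)) j
        _ ≤ m := dist_toLp_letterV_self_le (q t) (monotone_stepsV hx q t)
    push_cast
    linarith

theorem norm_sq_toLp_stepsV_le (q : ℕ → Fin m) {x : Fin m → ℝ} (hx : InV m x) (t : ℕ) :
    ‖toLp 2 (stepsV m q x t)‖ ^ 2 ≤
      ‖toLp 2 x‖ ^ 2 + 2 * (m * ∑ s ∈ Finset.range t, x (q s)) + (m * t) ^ 2 := by
  induction t with
  | zero => simp [stepsV]
  | succ t ih =>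
    have hletter : 2 * m * stepsV m q x t (q t) ≤ 2 * m * (x (q t) + m * t) :=
      mul_le_mul_of_nonneg_left (stepsV_apply_le q hx.2 t (q t)) (by positivity)
    rw [stepsV, letterV, sortVec, norm_toLp_comp_perm, norm_sq_toLp_shiftVec, (inV_stepsV hx q t).1,
      Finset.sum_range_succ]
    push_cast
    linarith [m.cast_nonneg (α := ℝ)]

theorem IsParking.norm_sq_toLp_stepsV_le_max (hcop : Nat.Coprime m n) {q : ℕ → Fin m}
    (hq : IsParking m n q) {x : Fin m → ℝ} (hx : InV m x) :
    ‖toLp 2 (stepsV m q x n)‖ ^ 2 ≤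
      max (‖toLp 2 x‖ ^ 2) (m * ((m * n) ^ 2) ^ 2 + (m * n) ^ 2) := by
  set C : ℝ := (m * n) ^ 2
  have : NeZero m := ⟨(q 0).pos.ne'⟩
  have htop : ∀ k, x k ≤ x ⊤ := fun k ↦ hx.2 le_top
  have hbot : ∀ k, x ⊥ ≤ x k := fun k ↦ hx.2 bot_le
  have hdrift := hq.mul_sum_le hcop hx.2 ⊤ ⊥
  have hnorm := norm_sq_toLp_stepsV_le q hx n
  rw [hx.1, mul_zero] at hdrift
  have hspread : 0 ≤ x ⊤ - x ⊥ := sub_nonneg.2 (htop ⊥)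
  -- One period changes `‖x‖ ^ 2` by at most `C - 2 * (x ⊤ - x ⊥)`.
  rcases le_total C (x ⊤ - x ⊥) with hC | hC
  · exact le_max_of_le_left (by linarith)
  · have hball : ‖toLp 2 x‖ ^ 2 ≤ m * C ^ 2 := by
      refine (norm_sq_toLp_le_card_mul hx.1 hbot htop).trans ?_
      rw [Fintype.card_fin]
      gcongr
    exact le_max_of_le_right (by linarith)

end Drift

section FixedPoint

variable {m n : ℕ}

/-- The Weyl chamber `V^m` as a subset of Euclidean space. -/
def weylChamber (m : ℕ) : Set (EuclideanSpace ℝ (Fin m)) := {y | InV m y}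

theorem zero_mem_weylChamber : 0 ∈ weylChamber m :=
  ⟨by simp, fun _ _ _ ↦ le_rfl⟩

theorem isClosed_weylChamber : IsClosed (weylChamber m) :=
  (isClosed_eq (by fun_prop) continuous_const).inter
    (isClosed_monotone.preimage (PiLp.continuous_ofLp 2 _))

theorem starConvex_zero_weylChamber : StarConvex ℝ 0 (weylChamber m) :=
  starConvex_zero_iff.2 fun y hy a ha _ ↦
    ⟨by simp [← Finset.mul_sum, hy.1], fun _ _ hij ↦ mul_le_mul_of_nonneg_left (hy.2 hij) ha⟩

theorem exists_isFixedPt_wordMap (hcop : Nat.Coprime m n) {q : ℕ → Fin m}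
    (hq : IsParking m n q) : ∃ w ∈ weylChamber m, IsFixedPt (wordMap q n) w := by
  set R : ℝ := √(m * ((m * n) ^ 2) ^ 2 + (m * n) ^ 2)
  have hmaps : MapsTo (wordMap q n) (weylChamber m ∩ closedBall 0 R)
      (weylChamber m ∩ closedBall 0 R) := by
    rintro y ⟨hy, hyR⟩
    refine ⟨inV_stepsV hy q n, ?_⟩
    rw [mem_closedBall_zero_iff, Real.le_sqrt (norm_nonneg _) (by positivity)] at hyR ⊢
    exact (hq.norm_sq_toLp_stepsV_le_max hcop hy).trans (max_le hyR le_rfl)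
  obtain ⟨w, ⟨hw, -⟩, hfix⟩ := exists_isFixedPt_of_lipschitzOnWith_one
    ((isCompact_closedBall 0 R).inter_left isClosed_weylChamber)
    ⟨zero_mem_weylChamber, mem_closedBall_self (Real.sqrt_nonneg _)⟩
    (starConvex_zero_weylChamber.inter
      ((convex_closedBall 0 R).starConvex (mem_closedBall_self (Real.sqrt_nonneg _))))
    (lipschitzWith_wordMap q n).lipschitzOnWith hmaps
  exact ⟨w, hw, hfix⟩

end FixedPoint

section Alcove

variable {m n : ℕ}

/-- The point `x` lies in the interior of an alcove, that is, on none of the hyperplanes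
`x_i - x_j = k m`. Encoded by the coordinates having pairwise distinct residues modulo `m`. -/
def InAlcove (x : Fin m → ℝ) : Prop :=
  Injective fun j ↦ (x j : AddCircle (m : ℝ))

/-- The rearrangement of coordinates made by the first `t` letters of `q` acting on `x`: the `j`-th
coordinate of the result comes from the coordinate `stepsPerm q x t j` of `x`. -/
noncomputable def stepsPerm (q : ℕ → Fin m) (x : Fin m → ℝ) : ℕ → Equiv.Perm (Fin m)
  | 0 => 1
  | t + 1 => stepsPerm q x t * Tuple.sort (shiftVec m (q t) (stepsV m q x t))

theorem coe_shiftVec (i : Fin m) (x : Fin m → ℝ) (j : Fin m) :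
    (shiftVec m i x j : AddCircle (m : ℝ)) = x j - (1 : ℝ) := by
  unfold shiftVec
  split_ifs <;> simp

theorem coe_stepsV (q : ℕ → Fin m) (x : Fin m → ℝ) (t : ℕ) (j : Fin m) :
    (stepsV m q x t j : AddCircle (m : ℝ)) = x (stepsPerm q x t j) - (t : ℝ) := by
  induction t generalizing j with
  | zero => simp [stepsV, stepsPerm]
  | succ t ih =>
    rw [stepsV, letterV, sortVec, comp_apply, coe_shiftVec, ih, stepsPerm, Equiv.Perm.mul_apply,
      Nat.cast_succ, AddCircle.coe_add, sub_sub]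

theorem coe_natCast_eq_zero_of_dvd {t : ℕ} (h : m ∣ t) : ((t : ℝ) : AddCircle (m : ℝ)) = 0 := by
  obtain ⟨k, rfl⟩ := h
  exact (AddCircle.coe_eq_zero_iff _).2 ⟨k, by simp [mul_comm]⟩

theorem eventually_stepsV_sub_eq (q : ℕ → Fin m) {x : Fin m → ℝ} (hx : InAlcove x) (t : ℕ) :
    ∀ᶠ y in 𝓝 x, stepsV m q y t - stepsV m q x t = (y - x) ∘ stepsPerm q x t := by
  induction t with
  | zero => exact .of_forall fun y ↦ rfl
  | succ t ih =>
    have hinj : Injective (shiftVec m (q t) (stepsV m q x t)) := by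
      refine Injective.of_comp (f := ((↑) : ℝ → AddCircle (m : ℝ))) ?_
      have := (sub_left_injective (b := ((t : ℝ) + (1 : ℝ) : AddCircle (m : ℝ)))).comp
        (hx.comp (stepsPerm q x t).injective)
      convert this using 1
      funext j
      simp [coe_shiftVec, coe_stepsV, sub_sub]
    have hcont : Continuous fun y ↦ shiftVec m (q t) (stepsV m q y t) := by
      have := continuous_stepsV q t
      unfold shiftVec
      fun_prop
    filter_upwards [ih, (hcont.tendsto x).eventually (eventually_sort_eq hinj)] with y hy hsort
    funext j
    have hcoord := congrFun hy (Tuple.sort (shiftVec m (q t) (stepsV m q x t)) j)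
    simp only [Pi.sub_apply, comp_apply] at hcoord
    simp only [stepsV, letterV, sortVec, hsort, stepsPerm, shiftVec, Pi.sub_apply, comp_apply,
      Equiv.Perm.mul_apply] at hcoord ⊢
    linarith

theorem addOrderOf_coe_natCast (hm : 0 < m) (hcop : Nat.Coprime m n) :
    addOrderOf ((n : ℝ) : AddCircle (m : ℝ)) = m := by
  have : Fact (0 < (m : ℝ)) := ⟨mod_cast hm⟩
  have h := AddCircle.addOrderOf_div_of_gcd_eq_one (p := (m : ℝ)) hm hcop.symm
  rwa [div_mul_cancel₀ _ (by positivity)] at h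

theorem inAlcove_of_isFixedPt_wordMap (hcop : Nat.Coprime m n) {q : ℕ → Fin m}
    {w : EuclideanSpace ℝ (Fin m)} (hw : IsFixedPt (wordMap q n) w) : InAlcove w := by
  refine injective_of_forall_eq_sub_addOrderOf (s := stepsPerm q w n)
    (by rw [Fintype.card_fin, addOrderOf_coe_natCast (q 0).pos hcop]) fun j ↦ ?_
  rw [← coe_stepsV]
  exact congrArg (fun y : EuclideanSpace ℝ (Fin m) ↦ (y j : AddCircle (m : ℝ))) hw.symm

theorem wordMap_eventuallyEq_id {q : ℕ → Fin m} {t : ℕ} (ht : m ∣ t)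
    {w : EuclideanSpace ℝ (Fin m)} (hw : IsFixedPt (wordMap q t) w) (halc : InAlcove w) :
    wordMap q t =ᶠ[𝓝 w] id := by
  have hw' : stepsV m q w t = w := congrArg ofLp hw
  have hperm : stepsPerm q w t = 1 := Equiv.ext fun j ↦ halc <| by
    have h := coe_stepsV q w t j
    rwa [hw', coe_natCast_eq_zero_of_dvd ht, sub_zero, eq_comm] at h
  filter_upwards [(PiLp.continuous_ofLp 2 _).tendsto w |>.eventually
    (eventually_stepsV_sub_eq q halc t)] with y hy
  rw [hw', hperm] at hy
  exact congrArg (toLp 2) (sub_left_injective hy)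

theorem finite_range_iterate_wordMap {q : ℕ → Fin m} (hq : Periodic q n) (hn : m ∣ n)
    {w : EuclideanSpace ℝ (Fin m)} (hw : IsFixedPt (wordMap q n) w)
    (x : EuclideanSpace ℝ (Fin m)) : (range fun k ↦ (wordMap q n)^[k] x).Finite := by
  have hbdd : IsBounded (range fun k ↦ (wordMap q n)^[k] x) := by
    refine (isBounded_closedBall (x := w) (r := dist x w)).subset (range_subset_iff.2 fun k ↦ ?_)
    simpa [(hw.iterate k).eq] using ((lipschitzWith_wordMap q n).iterate k).dist_le_mul x w
  refine Finite.of_finite_image (f := ofLp) ?_ (ofLp_injective 2).injOn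
  refine finite_of_isBounded_of_forall_coe_mem (Nat.cast_pos.2 (q 0).pos)
    (finite_range fun i ↦ (x i : AddCircle (m : ℝ)))
    ((PiLp.lipschitzWith_ofLp 2 _).isBounded_image hbdd) ?_
  rintro _ ⟨_, ⟨k, rfl⟩, rfl⟩ j
  simp only [iterate_wordMap hq, wordMap, coe_stepsV, coe_natCast_eq_zero_of_dvd (hn.mul_right k),
    sub_zero]
  exact mem_range_self _

end Alcove

theorem orbit_eventually_periodic_general {m n : ℕ} (hcop : Nat.Coprime m n) {p : ℕ → Fin m}
    (hpark : IsParking m n p) (x : Fin m → ℝ) :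
    ∃ k : ℕ, stepsV m (fun i ↦ p (i % n)) x (n * (k + m)) =
      stepsV m (fun i ↦ p (i % n)) x (n * k) := by
  set q : ℕ → Fin m := fun i ↦ p (i % n)
  have hq : Periodic q n := (Nat.periodic_mod n).comp p
  have hqpark : IsParking m n q := hpark.congr fun j hj ↦ congrArg p (Nat.mod_eq_of_lt hj).symm
  obtain ⟨w, -, hw⟩ := exists_isFixedPt_wordMap hcop hqpark
  have hwm : IsFixedPt (wordMap q (n * m)) w := iterate_wordMap hq m ▸ hw.iterate m
  have hqm : Periodic q (n * m) := mul_comm m n ▸ hq.nat_mul m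
  obtain ⟨k, hk⟩ := exists_isFixedPt_iterate_of_eventuallyEq_id (lipschitzWith_wordMap q (n * m))
    (wordMap_eventuallyEq_id (dvd_mul_left m n) hwm (inAlcove_of_isFixedPt_wordMap hcop hw))
    (finite_range_iterate_wordMap hqm (dvd_mul_left m n) hwm (toLp 2 x))
  refine ⟨m * k, ?_⟩
  have hk' : (wordMap q (n * m))^[k + 1] (toLp 2 x) = (wordMap q (n * m))^[k] (toLp 2 x) := by
    rwa [iterate_succ_apply']
  rw [iterate_wordMap hqm, iterate_wordMap hqm] at hk'
  rw [← mul_add_one, ← mul_assoc, ← mul_assoc]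
  exact congrArg ofLp hk'

/-- When `gcd(m,n) = 1` and `p` is an `(m,n)`-parking function, every orbit
`{p^k ⋅ x}` is eventually periodic with period dividing `m`: there is `k ≥ 0` with
`p^{k+m} ⋅ x = p^k ⋅ x`.  Here `p^k ⋅ x = stepsV m (fun i => p (i % n)) x (n*k)`. -/
theorem orbit_eventually_periodic (m n : ℕ) (hm : 0 < m) (hn : 0 < n)
    (hcop : Nat.gcd m n = 1) (p : ℕ → Fin m) (hpark : IsParking m n p)
    (x : Fin m → ℝ) (hx : InV m x) :
    ∃ k : ℕ, stepsV m (fun i => p (i % n)) x (n * (k + m)) =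
      stepsV m (fun i => p (i % n)) x (n * k) := by
  exact orbit_eventually_periodic_general hcop hpark x
end
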